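/- arXiv:0903.4405 — 5 statements merged into one kernel-verified Lean document; each statement's English description precedes it below -/
import Mathlib

section
/- (Cohn–Lempel equality) Let σ₁,…,σ_k be pairwise disjoint transpositions of elements of {1,…,m}, with interlacement matrix I over GF(2). Then the number of orbits of the permutation π = σσ₁⋯σ_k of {1,…,m} equals 1 + ν(I). -/
/-!
Write `τ` for the product of the transpositions `(A i  B i)` and `σ` for `finRotate m`. Both sides
are dimensions over `GF(2)`: the space of `τ σ`-invariant functions `f : Fin m → GF(2)` has
dimension `orbitCount (τ σ)`, and it is identified here with `GF(2) × ker I`.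

Given an invariant `f`, put `x i = f (A i) + f (B i)`. Since `τ` only exchanges `A i` with `B i`,
invariance says that `f` jumps by `x i` on entering `A i` or `B i` along the cycle `σ` and is
constant otherwise (`apply_tau`). Hence `f = f (last) + S x`, where `S x` (`stepSum`) adds up the
jumps met on `0, …, y`. Conversely, a function `c + S x` is invariant as soon as its own
differences across the chords `{A j, B j}` are the `x j`. By `stepSum_chord` these differences are
`x j + (I x) j`, so the condition is exactly `I x = 0`. Counting elements of
`GF(2) ^ orbits ≃ GF(2) × ker I` gives the theorem.
-/

/-- The GF(2)-nullity of a square matrix: number of columns minus rank. -/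
noncomputable def nullity {ι : Type*} [Fintype ι] (M : Matrix ι ι (ZMod 2)) : ℕ :=
  Fintype.card ι - M.rank

/-- The setoid on `α` whose classes are the orbits (cycles, including fixed points)
of a permutation. -/
def sameCycleSetoid {α : Type*} (π : Equiv.Perm α) : Setoid α :=
  ⟨π.SameCycle, ⟨fun x => Equiv.Perm.SameCycle.refl π x, fun h => h.symm, fun h h' => h.trans h'⟩⟩

/-- The number of orbits of a permutation (fixed points count as orbits). -/
noncomputable def orbitCount {α : Type*} (π : Equiv.Perm α) : ℕ :=
  Nat.card (Quotient (sameCycleSetoid π))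

/-- The interlacement matrix over GF(2) of a family of transpositions `(A i, B i)`
(with `A i < B i`): the `(i,j)` entry is `1` iff `i ≠ j` and the transpositions are
interlaced, i.e. `A i < A j < B i < B j` or `A j < A i < B j < B i`. -/
def interlacementMatrix {m k : ℕ} (A B : Fin k → Fin m) : Matrix (Fin k) (Fin k) (ZMod 2) :=
  Matrix.of fun i j =>
    if i ≠ j ∧ ((A i < A j ∧ A j < B i ∧ B i < B j) ∨ (A j < A i ∧ A i < B j ∧ B j < B i))
    then 1 else 0

namespace CohnLempel

open Equiv

variable {n k : ℕ}

/-- The jump at `z` prescribed by `x`: it is `x i` if `z` is an endpoint of the `i`-th chord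
(the endpoints being pairwise distinct), and `0` if `z` is not an endpoint. -/
def jump (A B : Fin k → Fin (n + 1)) (x : Fin k → ZMod 2) (z : Fin (n + 1)) : ZMod 2 :=
  ∑ i, x i * ((if A i = z then 1 else 0) + (if B i = z then 1 else 0))

/-- The sum of the jumps prescribed by `x` over the points `0, …, y`. -/
def stepSum (A B : Fin k → Fin (n + 1)) (x : Fin k → ZMod 2) (y : Fin (n + 1)) : ZMod 2 :=
  ∑ i, x i * ((if A i ≤ y then 1 else 0) + (if B i ≤ y then 1 else 0))

/-- The product of the transpositions `(A i  B i)`. -/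
def tau (A B : Fin k → Fin (n + 1)) : Perm (Fin (n + 1)) :=
  (List.ofFn fun i => swap (A i) (B i)).prod

lemma endpoints_ne {A B : Fin k → Fin (n + 1)} (hAB : ∀ i, A i < B i)
    (hdisj : ∀ i j, i ≠ j → Perm.Disjoint (swap (A i) (B i)) (swap (A j) (B j)))
    {i j : Fin k} (hij : i ≠ j) : A i ≠ A j ∧ A i ≠ B j ∧ B i ≠ A j ∧ B i ≠ B j := by
  have hi := (hAB i).ne
  have hj := (hAB j).ne
  have h1 := hdisj i j hij (A i)
  have h2 := hdisj i j hij (B i)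
  rw [swap_apply_left] at h1
  rw [swap_apply_right] at h2
  refine ⟨fun h => ?_, fun h => ?_, fun h => ?_, fun h => ?_⟩
  · rw [h, swap_apply_left] at h1; rw [← h] at h1; grind
  · rw [h, swap_apply_right] at h1; grind
  · rw [h, swap_apply_left] at h2; grind
  · rw [h, swap_apply_right] at h2; grind

lemma pairwise_disjoint {A B : Fin k → Fin (n + 1)}
    (hdisj : ∀ i j, i ≠ j → Perm.Disjoint (swap (A i) (B i)) (swap (A j) (B j))) :
    (List.ofFn fun i => swap (A i) (B i)).Pairwise Perm.Disjoint := by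
  rw [List.pairwise_ofFn]
  exact fun i j hij => hdisj i j hij.ne

lemma tau_left {A B : Fin k → Fin (n + 1)} (hAB : ∀ i, A i < B i)
    (hdisj : ∀ i j, i ≠ j → Perm.Disjoint (swap (A i) (B i)) (swap (A j) (B j)))
    (i : Fin k) : tau A B (A i) = B i := by
  have h := Perm.eq_on_support_mem_disjoint (f := swap (A i) (B i))
    (List.mem_ofFn.2 ⟨i, rfl⟩) (pairwise_disjoint hdisj) (A i)
    (by simpa using (hAB i).ne')
  rw [tau, ← h, swap_apply_left]

lemma tau_right {A B : Fin k → Fin (n + 1)} (hAB : ∀ i, A i < B i)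
    (hdisj : ∀ i j, i ≠ j → Perm.Disjoint (swap (A i) (B i)) (swap (A j) (B j)))
    (i : Fin k) : tau A B (B i) = A i := by
  have h := Perm.eq_on_support_mem_disjoint (f := swap (A i) (B i))
    (List.mem_ofFn.2 ⟨i, rfl⟩) (pairwise_disjoint hdisj) (B i)
    (by simpa using (hAB i).ne)
  rw [tau, ← h, swap_apply_right]

lemma list_prod_fixed {α : Type*} (l : List (Perm α)) (z : α) (h : ∀ g ∈ l, g z = z) :
    l.prod z = z := by
  induction l with
  | nil => simp
  | cons a l ih =>
    rw [List.prod_cons, Perm.mul_apply, ih fun g hg => h g (List.mem_cons_of_mem _ hg)]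
    exact h a List.mem_cons_self

lemma tau_fixed {A B : Fin k → Fin (n + 1)} {z : Fin (n + 1)} (hA : ∀ i, A i ≠ z)
    (hB : ∀ i, B i ≠ z) : tau A B z = z := by
  refine list_prod_fixed _ _ fun g hg => ?_
  obtain ⟨i, rfl⟩ := List.mem_ofFn.1 hg
  exact swap_apply_of_ne_of_ne (hA i).symm (hB i).symm

lemma jump_left {A B : Fin k → Fin (n + 1)} (hAB : ∀ i, A i < B i)
    (hdisj : ∀ i j, i ≠ j → Perm.Disjoint (swap (A i) (B i)) (swap (A j) (B j)))
    (x : Fin k → ZMod 2) (j : Fin k) : jump A B x (A j) = x j := by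
  rw [jump, Finset.sum_eq_single j]
  · simp [(hAB j).ne']
  · intro i _ hij
    obtain ⟨h1, -, h3, -⟩ := endpoints_ne hAB hdisj hij
    simp [h1, h3]
  · simp

lemma jump_right {A B : Fin k → Fin (n + 1)} (hAB : ∀ i, A i < B i)
    (hdisj : ∀ i j, i ≠ j → Perm.Disjoint (swap (A i) (B i)) (swap (A j) (B j)))
    (x : Fin k → ZMod 2) (j : Fin k) : jump A B x (B j) = x j := by
  rw [jump, Finset.sum_eq_single j]
  · simp [(hAB j).ne]
  · intro i _ hij
    obtain ⟨-, h2, -, h4⟩ := endpoints_ne hAB hdisj hij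
    simp [h2, h4]
  · simp

lemma apply_tau {A B : Fin k → Fin (n + 1)} (hAB : ∀ i, A i < B i)
    (hdisj : ∀ i j, i ≠ j → Perm.Disjoint (swap (A i) (B i)) (swap (A j) (B j)))
    (f : Fin (n + 1) → ZMod 2) (z : Fin (n + 1)) :
    f (tau A B z) = f z + jump A B (fun i => f (A i) + f (B i)) z := by
  by_cases hA : ∃ i, A i = z
  · obtain ⟨i, rfl⟩ := hA
    rw [tau_left hAB hdisj, jump_left hAB hdisj, ← add_assoc, CharTwo.add_self_eq_zero, zero_add]
  by_cases hB : ∃ i, B i = z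
  · obtain ⟨i, rfl⟩ := hB
    rw [tau_right hAB hdisj, jump_right hAB hdisj, add_left_comm, CharTwo.add_self_eq_zero,
      add_zero]
  push Not at hA hB
  rw [tau_fixed hA hB, jump]
  simp [hA, hB]

lemma stepSum_last (A B : Fin k → Fin (n + 1)) (x : Fin k → ZMod 2) :
    stepSum A B x (Fin.last n) = 0 := by
  simp [stepSum, Fin.le_last, CharTwo.add_self_eq_zero]

/-- Moving one step along the cycle changes `stepSum` by the jump at the new point. At the wrap
from `last` to `0` this uses that each `x i` occurs twice among the jumps. -/
lemma stepSum_rotate (A B : Fin k → Fin (n + 1)) (x : Fin k → ZMod 2) (y : Fin (n + 1)) :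
    stepSum A B x (finRotate (n + 1) y) =
      stepSum A B x y + jump A B x (finRotate (n + 1) y) := by
  induction y using Fin.lastCases with
  | last =>
    rw [stepSum_last, zero_add, finRotate_last, stepSum, jump]
    simp
  | cast y =>
    have step : ∀ a : Fin (n + 1), (if a ≤ y.succ then (1 : ZMod 2) else 0) =
        (if a ≤ y.castSucc then 1 else 0) + (if a = y.succ then 1 else 0) := by
      intro a
      have h1 : a ≤ y.succ ↔ a ≤ y.castSucc ∨ a = y.succ := by
        simp only [Fin.le_def, Fin.ext_iff, Fin.val_succ, Fin.val_castSucc]; omega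
      by_cases h3 : a = y.succ
      · simp [h3]
      · simp [h1, h3]
    rw [finRotate_apply, Fin.coeSucc_eq_succ, stepSum, stepSum, jump,
      ← Finset.sum_add_distrib]
    refine Finset.sum_congr rfl fun i _ => ?_
    rw [step (A i), step (B i)]
    ring

/-- The chord `{A j, B j}` separates an odd number of endpoints of chord `i ≠ j` exactly when the
two are interlaced; for `i = j` only `B j` itself is counted. -/
lemma stepSum_chord {A B : Fin k → Fin (n + 1)} (hAB : ∀ i, A i < B i)
    (hdisj : ∀ i j, i ≠ j → Perm.Disjoint (swap (A i) (B i)) (swap (A j) (B j)))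
    (x : Fin k → ZMod 2) (j : Fin k) :
    stepSum A B x (A j) + stepSum A B x (B j) =
      x j + ((interlacementMatrix A B).mulVec x) j := by
  have hx : x j = ∑ i, if i = j then x i else 0 := by simp
  rw [stepSum, stepSum, Matrix.mulVec, dotProduct, hx, ← Finset.sum_add_distrib,
    ← Finset.sum_add_distrib]
  refine Finset.sum_congr rfl fun i _ => ?_
  have two : (1 : ZMod 2) + 1 = 0 := rfl
  simp only [interlacementMatrix, Matrix.of_apply]
  by_cases hij : i = j
  · subst hij
    have h := hAB i
    simp [h.le, h.not_ge, two]
  · obtain ⟨h1, h2, h3, h4⟩ := endpoints_ne hAB hdisj hij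
    have hi := hAB i
    have hj := hAB j
    have key : ((if A i ≤ A j then (1 : ZMod 2) else 0) + (if B i ≤ A j then 1 else 0)) +
        ((if A i ≤ B j then 1 else 0) + (if B i ≤ B j then 1 else 0)) =
        if j ≠ i ∧ ((A j < A i ∧ A i < B j ∧ B j < B i) ∨ (A i < A j ∧ A j < B i ∧ B i < B j))
          then 1 else 0 := by
      split_ifs <;> first | rfl | (exfalso; omega)
    rw [← mul_add, key, if_neg hij, zero_add, mul_comm]

lemma eq_last_of_rotate {f : Fin (n + 1) → ZMod 2} (h : ∀ y, f (finRotate (n + 1) y) = f y)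
    (y : Fin (n + 1)) : f y = f (Fin.last n) := by
  induction y using Fin.induction with
  | zero => rw [← h (Fin.last n), finRotate_last]
  | succ i ih => rw [← ih, ← h i.castSucc, finRotate_apply, Fin.coeSucc_eq_succ]

/-- An invariant function is its value at `last` plus the `stepSum` of its chord differences. -/
lemma invariant_eq {A B : Fin k → Fin (n + 1)} (hAB : ∀ i, A i < B i)
    (hdisj : ∀ i j, i ≠ j → Perm.Disjoint (swap (A i) (B i)) (swap (A j) (B j)))
    {f : Fin (n + 1) → ZMod 2} (hf : ∀ y, f ((tau A B * finRotate (n + 1)) y) = f y)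
    (y : Fin (n + 1)) :
    f y = f (Fin.last n) + stepSum A B (fun i => f (A i) + f (B i)) y := by
  have h := eq_last_of_rotate
    (f := fun y => f y + stepSum A B (fun i => f (A i) + f (B i)) y) (fun y => by
      have h1 := hf y
      rw [Perm.mul_apply, apply_tau hAB hdisj f] at h1
      rw [stepSum_rotate, ← h1]
      ring) y
  simp only [stepSum_last, add_zero] at h
  rw [← h, add_assoc, CharTwo.add_self_eq_zero, add_zero]

/-- Invariant functions correspond to pairs of a constant and a vector in the kernel of the
interlacement matrix. -/
def invariantEquiv {A B : Fin k → Fin (n + 1)} (hAB : ∀ i, A i < B i)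
    (hdisj : ∀ i j, i ≠ j → Perm.Disjoint (swap (A i) (B i)) (swap (A j) (B j))) :
    {f : Fin (n + 1) → ZMod 2 // ∀ y, f ((tau A B * finRotate (n + 1)) y) = f y} ≃
      ZMod 2 × LinearMap.ker (interlacementMatrix A B).mulVecLin where
  toFun f := (f.1 (Fin.last n), ⟨fun i => f.1 (A i) + f.1 (B i), by
    rw [LinearMap.mem_ker, Matrix.mulVecLin_apply]
    funext j
    have h := stepSum_chord hAB hdisj (fun i => f.1 (A i) + f.1 (B i)) j
    have hA := invariant_eq hAB hdisj f.2 (A j)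
    have hB := invariant_eq hAB hdisj f.2 (B j)
    have h0 : f.1 (A j) + f.1 (B j) =
        stepSum A B (fun i => f.1 (A i) + f.1 (B i)) (A j) +
          stepSum A B (fun i => f.1 (A i) + f.1 (B i)) (B j) := by
      rw [hA, hB, add_add_add_comm, CharTwo.add_self_eq_zero, zero_add]
    rw [← h0] at h
    exact left_eq_add.1 h⟩)
  invFun p := ⟨fun y => p.1 + stepSum A B p.2.1 y, fun y => by
    have hx : (fun i => (p.1 + stepSum A B p.2.1 (A i)) + (p.1 + stepSum A B p.2.1 (B i))) =
        p.2.1 := by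
      funext j
      have hk : (interlacementMatrix A B).mulVec p.2.1 = 0 := p.2.2
      rw [add_add_add_comm, CharTwo.add_self_eq_zero, zero_add, stepSum_chord hAB hdisj, hk]
      simp
    have h := apply_tau hAB hdisj (fun y => p.1 + stepSum A B p.2.1 y) (finRotate (n + 1) y)
    rw [hx] at h
    rw [Perm.mul_apply]
    simp only
    rw [h, stepSum_rotate, add_assoc, add_assoc, CharTwo.add_self_eq_zero, add_zero]⟩
  left_inv f := by
    apply Subtype.ext
    funext y
    exact (invariant_eq hAB hdisj f.2 y).symm
  right_inv p := by
    refine Prod.ext ?_ (Subtype.ext ?_)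
    · simp [stepSum_last]
    · funext j
      have hk : (interlacementMatrix A B).mulVec p.2.1 = 0 := p.2.2
      simp only
      rw [add_add_add_comm, CharTwo.add_self_eq_zero, zero_add, stepSum_chord hAB hdisj, hk]
      simp

/-- Invariant functions are the functions on the set of orbits. -/
def orbitFunctionEquiv {α β : Type*} (π : Perm α) :
    (Quotient (sameCycleSetoid π) → β) ≃ {f : α → β // ∀ y, f (π y) = f y} where
  toFun g := ⟨fun y => g (Quotient.mk _ y), fun y =>
    congrArg g (Quotient.sound (s := sameCycleSetoid π)
      (Perm.sameCycle_apply_left.2 (Perm.SameCycle.refl π y)))⟩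
  invFun f := Quotient.lift f.1 (by
    rintro a _ ⟨i, rfl⟩
    have hinv : ∀ y, f.1 (π⁻¹ y) = f.1 y := fun y => by
      rw [← f.2 (π⁻¹ y), ← Perm.mul_apply, mul_inv_cancel, Perm.one_apply]
    induction i using Int.induction_on with
    | zero => simp
    | succ i ih => rw [add_comm, zpow_add, zpow_one, Perm.mul_apply, f.2, ih]
    | pred i ih => rw [sub_eq_neg_add, zpow_add, zpow_neg_one, Perm.mul_apply, hinv, ih])
  left_inv g := by
    funext q
    induction q using Quotient.inductionOn
    rfl
  right_inv f := rfl

lemma nullity_eq_finrank_ker (M : Matrix (Fin k) (Fin k) (ZMod 2)) :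
    nullity M = Module.finrank (ZMod 2) (LinearMap.ker M.mulVecLin) := by
  have h := LinearMap.finrank_range_add_finrank_ker M.mulVecLin
  rw [Module.finrank_fintype_fun_eq_card] at h
  rw [nullity, Matrix.rank]
  omega

end CohnLempel

/-- **Cohn–Lempel equality.** If `σ₁, …, σ_k` are pairwise disjoint transpositions of
elements of `{1, …, m}` with interlacement matrix `I`, then the permutation
`π = σ σ₁ ⋯ σ_k`, where `σ = (1 2 … m)`, has exactly `1 + ν(I)` orbits. -/
theorem cohn_lempel {m k : ℕ} (hm : 1 ≤ m) (A B : Fin k → Fin m) (hAB : ∀ i, A i < B i)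
    (hdisj : ∀ i j, i ≠ j →
      Equiv.Perm.Disjoint (Equiv.swap (A i) (B i)) (Equiv.swap (A j) (B j))) :
    orbitCount ((List.ofFn fun i => Equiv.swap (A i) (B i)).prod * finRotate m) =
      1 + nullity (interlacementMatrix A B) := by
  obtain ⟨n, rfl⟩ : ∃ n, m = n + 1 := ⟨m - 1, by omega⟩
  have e := (CohnLempel.orbitFunctionEquiv (β := ZMod 2) _).trans
    (CohnLempel.invariantEquiv hAB hdisj)
  have hc := Nat.card_congr e
  have hk := Module.natCard_eq_pow_finrank (K := ZMod 2)
    (V := LinearMap.ker (interlacementMatrix A B).mulVecLin)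
  rw [Nat.card_fun, Nat.card_prod, hk, Nat.card_zmod, ← pow_succ',
    ← CohnLempel.nullity_eq_finrank_ker] at hc
  rw [add_comm 1]
  exact Nat.pow_right_injective le_rfl hc
end

section
/- Let σ₁,…,σ_k be pairwise disjoint transpositions of elements of {1,…,m}, with interlacement matrix I over GF(2). For each subset S ⊆ {1,…,k} let π_S = σ·∏_{i∈S} σᵢ and let I_S be the principal submatrix of I on the rows and columns indexed by S. Then the identity Σ_{S⊆{1,…,k}} (y−1)^{orb(π_S)−1} = Σ_{S⊆{1,…,k}} (y−1)^{ν(I_S)} holds in the polynomial ring ℤ[y], where orb(π_S) denotes the number of orbits of π_S. -/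
/-! ### Interval indicators and their jumps -/

/-- The `GF(2)`-valued indicator function of the interval `[a, b)`. -/
def arc {m : ℕ} (a b x : Fin m) : ZMod 2 := if a ≤ x ∧ x < b then 1 else 0

/-- The function `c + ∑ i, v i * χ i`, with `χ i` the indicator of `[A i, B i)`. -/
def arcSum {m : ℕ} {ι : Type*} [Fintype ι] (A B : ι → Fin m) (c : ZMod 2) (v : ι → ZMod 2)
    (x : Fin m) : ZMod 2 := c + ∑ i, v i * arc (A i) (B i) x

/-- The permutation `τ` exchanges `A i` and `B i` for every `i` and fixes all other points. -/
structure IsSwapProduct {m : ℕ} {ι : Type*} (A B : ι → Fin m) (τ : Equiv.Perm (Fin m)) :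
    Prop where
  map_left : ∀ i, τ (A i) = B i
  map_right : ∀ i, τ (B i) = A i
  map_other : ∀ x, (∀ i, x ≠ A i ∧ x ≠ B i) → τ x = x

/-- The indicator of `[a, b)` jumps exactly at `a` and at `b`. This holds cyclically because
`0 ≤ a` and the last point is not in `[a, b)`. -/
lemma arc_finRotate {n : ℕ} (a b x : Fin (n + 1)) (hab : a < b) :
    arc a b (finRotate (n + 1) x) = arc a b x +
      ((if finRotate (n + 1) x = a then 1 else 0) + (if finRotate (n + 1) x = b then 1 else 0)) := by
  have h2 : (1 + 1 : ZMod 2) = 0 := by decide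
  unfold arc
  rcases eq_or_ne x (Fin.last n) with rfl | hx
  · rw [finRotate_last]
    simp only [Fin.le_def, Fin.lt_def, Fin.ext_iff, Fin.val_last, Fin.val_zero] at *
    have := a.2
    have := b.2
    split_ifs <;> first | omega | simp_all
  · have hv : ((finRotate (n + 1) x : Fin (n + 1)) : ℕ) = x + 1 := coe_finRotate_of_ne_last hx
    simp only [Fin.le_def, Fin.lt_def, Fin.ext_iff, hv] at *
    split_ifs <;> first | omega | simp_all

lemma arcSum_finRotate {n : ℕ} {ι : Type*} [Fintype ι] (A B : ι → Fin (n + 1))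
    (hAB : ∀ i, A i < B i) (c : ZMod 2) (v : ι → ZMod 2) (x : Fin (n + 1)) :
    arcSum A B c v (finRotate (n + 1) x) = arcSum A B c v x +
      ∑ i, v i * ((if finRotate (n + 1) x = A i then 1 else 0) +
        (if finRotate (n + 1) x = B i then 1 else 0)) := by
  unfold arcSum
  rw [add_assoc, ← Finset.sum_add_distrib]
  simp only [← mul_add, ← arc_finRotate _ _ x (hAB _)]

/-- A rotation-invariant function is constant. -/
lemma eq_apply_zero_of_finRotate {n : ℕ} {β : Type*} (h : Fin (n + 1) → β)
    (hh : ∀ x, h (finRotate (n + 1) x) = h x) (x : Fin (n + 1)) : h x = h 0 := by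
  induction x using Fin.induction with
  | zero => rfl
  | succ i ih =>
    rw [← ih, ← hh i.castSucc]
    congr 1
    rw [finRotate_apply, Fin.coeSucc_eq_succ]

/-! ### Invariant functions and the kernel of the interlacement matrix -/

section Core

variable {n : ℕ} {ι : Type*} [Fintype ι] [DecidableEq ι] {A B : ι → Fin (n + 1)}
  {τ : Equiv.Perm (Fin (n + 1))} {M : Matrix ι ι (ZMod 2)}

/-- The total jump at the endpoint `A j` of the arcs is `v j`, as all endpoints are distinct. -/
lemma sum_jump_left (hA : Function.Injective A) (hne : ∀ i j, A i ≠ B j) (v : ι → ZMod 2) (j : ι) :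
    ∑ i, v i * ((if A j = A i then 1 else 0) + (if A j = B i then 1 else 0)) = v j := by
  simp [hne, hA.eq_iff]

lemma sum_jump_right (hB : Function.Injective B) (hne : ∀ i j, A i ≠ B j) (v : ι → ZMod 2)
    (j : ι) :
    ∑ i, v i * ((if B j = A i then 1 else 0) + (if B j = B i then 1 else 0)) = v j := by
  simp [fun i j => (hne i j).symm, hB.eq_iff]

lemma arcSum_endpoints (hAB : ∀ i, A i < B i)
    (hM : ∀ i j, i ≠ j → M i j = arc (A j) (B j) (A i) + arc (A j) (B j) (B i))
    (hM0 : ∀ i, M i i = 0) (c : ZMod 2) (v : ι → ZMod 2) (j : ι) :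
    arcSum A B c v (A j) + arcSum A B c v (B j) = v j + M.mulVec v j := by
  have hcc : c + c = 0 := CharTwo.add_self_eq_zero c
  have h1 : arcSum A B c v (A j) + arcSum A B c v (B j) =
      ∑ i, v i * (arc (A i) (B i) (A j) + arc (A i) (B i) (B j)) := by
    unfold arcSum
    rw [add_add_add_comm, hcc, zero_add, ← Finset.sum_add_distrib]
    simp only [mul_add]
  have h2 : ∀ i, v i * (arc (A i) (B i) (A j) + arc (A i) (B i) (B j)) =
      (if j = i then v i else 0) + M j i * v i := by
    intro i
    split_ifs with h
    · subst h
      simp [hM0, arc, hAB]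
    · rw [hM j i h, zero_add, mul_comm]
  rw [h1, Finset.sum_congr rfl (fun i _ => h2 i), Finset.sum_add_distrib]
  simp [Matrix.mulVec, dotProduct]

lemma arcSum_invariant_iff (hAB : ∀ i, A i < B i) (hA : Function.Injective A)
    (hB : Function.Injective B) (hne : ∀ i j, A i ≠ B j) (hτ : IsSwapProduct A B τ)
    (hM : ∀ i j, i ≠ j → M i j = arc (A j) (B j) (A i) + arc (A j) (B j) (B i))
    (hM0 : ∀ i, M i i = 0) (c : ZMod 2) (v : ι → ZMod 2) :
    (∀ x, arcSum A B c v ((τ * finRotate (n + 1)) x) = arcSum A B c v x) ↔ M.mulVec v = 0 := by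
  have key := fun x => arcSum_finRotate A B hAB c v x
  have he := arcSum_endpoints hAB hM hM0 c v
  constructor
  · intro h
    funext j
    have h1 := h ((finRotate (n + 1)).symm (A j))
    have h2 := key ((finRotate (n + 1)).symm (A j))
    simp only [Equiv.Perm.mul_apply, Equiv.apply_symm_apply, hτ.map_left] at h1 h2
    rw [sum_jump_left hA hne, ← h1] at h2
    have h3 := he j
    rw [h2, add_right_comm, CharTwo.add_self_eq_zero, zero_add] at h3
    simpa using h3
  · intro h x
    simp only [h, Pi.zero_apply, add_zero] at he
    have hk := key x
    rw [Equiv.Perm.mul_apply]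
    generalize finRotate (n + 1) x = y at hk ⊢
    by_cases hy : ∀ i, y ≠ A i ∧ y ≠ B i
    · rw [hτ.map_other y hy, hk]
      simp [fun i => (hy i).1, fun i => (hy i).2]
    · simp only [not_forall, not_and_or, not_not] at hy
      obtain ⟨j, rfl | rfl⟩ := hy
      · rw [hτ.map_left]
        rw [sum_jump_left hA hne, ← he j, ← add_assoc] at hk
        grind
      · rw [hτ.map_right]
        rw [sum_jump_right hB hne, ← he j] at hk
        grind

/-- Every invariant function is `c + ∑ i, v i * χ i`, with `v i` its jump at `A i`. -/
lemma exists_arcSum (hAB : ∀ i, A i < B i) (hA : Function.Injective A)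
    (hB : Function.Injective B) (hne : ∀ i j, A i ≠ B j) (hτ : IsSwapProduct A B τ)
    (f : Fin (n + 1) → ZMod 2) (hf : ∀ x, f ((τ * finRotate (n + 1)) x) = f x) :
    ∃ c v, arcSum A B c v = f := by
  set v : ι → ZMod 2 := fun i => f (A i) + f (B i) with hv
  have hjump : ∀ y, f y + f (τ y) =
      ∑ i, v i * ((if y = A i then 1 else 0) + (if y = B i then 1 else 0)) := by
    intro y
    by_cases hy : ∀ i, y ≠ A i ∧ y ≠ B i
    · rw [hτ.map_other y hy, CharTwo.add_self_eq_zero]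
      simp [fun i => (hy i).1, fun i => (hy i).2]
    · simp only [not_forall, not_and_or, not_not] at hy
      obtain ⟨j, rfl | rfl⟩ := hy
      · rw [hτ.map_left, sum_jump_left hA hne]
      · rw [hτ.map_right, sum_jump_right hB hne, add_comm]
  have hconst := eq_apply_zero_of_finRotate (fun x => f x + arcSum A B 0 v x) (by
    intro x
    have h1 := hjump (finRotate (n + 1) x)
    have h2 := hf x
    rw [Equiv.Perm.mul_apply] at h2
    have h3 := CharTwo.add_self_eq_zero (f (finRotate (n + 1) x))
    rw [arcSum_finRotate A B hAB, ← h1, h2]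
    linear_combination h3)
  refine ⟨f 0 + arcSum A B 0 v 0, v, funext fun x => ?_⟩
  have h := hconst x
  have h0 : ∀ c, arcSum A B c v x = c + arcSum A B 0 v x := by
    intro c
    simp [arcSum]
  have h3 := CharTwo.add_self_eq_zero (arcSum A B 0 v x)
  rw [h0, ← h]
  linear_combination h3

/-- The invariant functions of a permutation are the functions on its set of orbits. -/
lemma card_invariant (π : Equiv.Perm (Fin (n + 1))) :
    Nat.card {f : Fin (n + 1) → ZMod 2 // ∀ x, f (π x) = f x} = 2 ^ orbitCount π := by
  have e : {f : Fin (n + 1) → ZMod 2 // ∀ x, f (π x) = f x} ≃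
      (Quotient (sameCycleSetoid π) → ZMod 2) :=
    { toFun := fun f => Quotient.lift f.1 (by
        rintro a b ⟨k, rfl⟩
        have hz : ∀ (k : ℤ) x, f.1 ((π ^ k) x) = f.1 x := by
          intro k
          induction k using Int.induction_on with
          | zero => simp
          | succ i ih =>
            intro x
            rw [zpow_add_one, Equiv.Perm.mul_apply, ih, f.2]
          | pred i ih =>
            intro x
            rw [zpow_sub_one, Equiv.Perm.mul_apply, ih, ← f.2]
            simp
        exact (hz k a).symm)
      invFun := fun g => ⟨fun x => g (Quotient.mk (sameCycleSetoid π) x), fun x =>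
        congrArg g (Quotient.sound (s := sameCycleSetoid π)
          (Equiv.Perm.sameCycle_apply_left.2 (.refl π x)))⟩
      left_inv := fun f => rfl
      right_inv := fun g => funext fun q => Quotient.inductionOn q fun _ => rfl }
  rw [Nat.card_congr e, Nat.card_fun, Nat.card_zmod, orbitCount]

lemma card_ker {κ : Type*} [Fintype κ] (M : Matrix κ κ (ZMod 2)) :
    Nat.card {v : κ → ZMod 2 // M.mulVec v = 0} = 2 ^ nullity M := by
  have h1 := M.mulVecLin.finrank_range_add_finrank_ker
  have h2 : Nat.card (LinearMap.ker M.mulVecLin) =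
      2 ^ Module.finrank (ZMod 2) (LinearMap.ker M.mulVecLin) := by
    rw [Module.natCard_eq_pow_finrank (K := ZMod 2), Nat.card_zmod]
  rw [Module.finrank_fintype_fun_eq_card] at h1
  have h3 : nullity M = Module.finrank (ZMod 2) (LinearMap.ker M.mulVecLin) := by
    unfold nullity Matrix.rank
    omega
  rw [h3, ← h2]
  rfl

/-- The Cohn–Lempel formula: `(c, v) ↦ arcSum A B c v` is a bijection from `GF(2) × ker M` onto
the invariant functions. -/
lemma orbitCount_eq (hAB : ∀ i, A i < B i) (hA : Function.Injective A)
    (hB : Function.Injective B) (hne : ∀ i j, A i ≠ B j) (hτ : IsSwapProduct A B τ)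
    (hM : ∀ i j, i ≠ j → M i j = arc (A j) (B j) (A i) + arc (A j) (B j) (B i))
    (hM0 : ∀ i, M i i = 0) :
    orbitCount (τ * finRotate (n + 1)) = nullity M + 1 := by
  have hinv := arcSum_invariant_iff hAB hA hB hne hτ hM hM0
  have hbij : Function.Bijective
      (fun p : ZMod 2 × {v : ι → ZMod 2 // M.mulVec v = 0} =>
        (⟨arcSum A B p.1 p.2.1, (hinv p.1 p.2.1).2 p.2.2⟩ :
          {f : Fin (n + 1) → ZMod 2 // ∀ x, f ((τ * finRotate (n + 1)) x) = f x})) := by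
    constructor
    · rintro ⟨c, v, hv⟩ ⟨c', v', hv'⟩ h
      have h : arcSum A B c v = arcSum A B c' v' := congrArg Subtype.val h
      have hvv : v = v' := by
        funext j
        have h1 := arcSum_endpoints hAB hM hM0 c v j
        have h2 := arcSum_endpoints hAB hM hM0 c' v' j
        rw [h, h2, hv, hv'] at h1
        simpa using h1.symm
      subst hvv
      have hcc : c = c' := by simpa [arcSum] using congrFun h 0
      rw [hcc]
    · rintro ⟨f, hf⟩
      obtain ⟨c, v, rfl⟩ := exists_arcSum hAB hA hB hne hτ f hf
      exact ⟨⟨c, v, (hinv c v).1 hf⟩, rfl⟩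
  have hcard := Nat.card_congr (Equiv.ofBijective _ hbij)
  rw [card_invariant, Nat.card_prod, card_ker, Nat.card_zmod, ← pow_succ'] at hcard
  exact (Nat.pow_right_injective le_rfl hcard).symm

end Core

/-! ### Disjoint transpositions and the interlacement matrix -/

lemma isSwapProduct_noncommProd {m k : ℕ} (A B : Fin k → Fin m) (hA : Function.Injective A)
    (hB : Function.Injective B) (hne : ∀ i j, A i ≠ B j) (S : Finset (Fin k))
    (comm : (S : Set (Fin k)).Pairwise
      (Function.onFun Commute fun i => Equiv.swap (A i) (B i))) :
    IsSwapProduct (fun i : {x // x ∈ S} => A i) (fun i : {x // x ∈ S} => B i)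
      (S.noncommProd (fun i => Equiv.swap (A i) (B i)) comm) := by
  induction S using Finset.induction_on with
  | empty => exact ⟨by simp, by simp, by simp⟩
  | insert a S ha ih =>
    have ih := ih (comm.mono (by simp))
    have hfix : ∀ i ∈ S, Equiv.swap (A a) (B a) (A i) = A i ∧
        Equiv.swap (A a) (B a) (B i) = B i := by
      intro i hi
      have hia : i ≠ a := fun h => ha (h ▸ hi)
      exact ⟨Equiv.swap_apply_of_ne_of_ne (hA.ne hia) (hne i a),
        Equiv.swap_apply_of_ne_of_ne (hne a i).symm (hB.ne hia)⟩
    have hout : ∀ x, (x = A a ∨ x = B a) → ∀ i : {x // x ∈ S}, x ≠ A i ∧ x ≠ B i := by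
      rintro x hx ⟨i, hi⟩
      have hia : a ≠ i := fun h => ha (h ▸ hi)
      rcases hx with rfl | rfl
      · exact ⟨hA.ne hia, hne a i⟩
      · exact ⟨(hne i a).symm, hB.ne hia⟩
    rw [Finset.noncommProd_insert_of_notMem _ _ _ _ ha]
    refine ⟨?_, ?_, ?_⟩
    · rintro ⟨i, hi⟩
      rw [Equiv.Perm.mul_apply]
      rcases Finset.mem_insert.1 hi with rfl | hi
      · rw [ih.map_other _ (hout _ (Or.inl rfl)), Equiv.swap_apply_left]
      · rw [ih.map_left ⟨i, hi⟩]
        exact (hfix i hi).2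
    · rintro ⟨i, hi⟩
      rw [Equiv.Perm.mul_apply]
      rcases Finset.mem_insert.1 hi with rfl | hi
      · rw [ih.map_other _ (hout _ (Or.inr rfl)), Equiv.swap_apply_right]
      · rw [ih.map_right ⟨i, hi⟩]
        exact (hfix i hi).1
    · intro x hx
      rw [Equiv.Perm.mul_apply,
        ih.map_other x (fun i => hx ⟨i, Finset.mem_insert_of_mem i.2⟩)]
      have := hx ⟨a, Finset.mem_insert_self a S⟩
      exact Equiv.swap_apply_of_ne_of_ne this.1 this.2

lemma interlacementMatrix_eq_arc {m k : ℕ} (A B : Fin k → Fin m) (hAB : ∀ i, A i < B i)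
    (hA : Function.Injective A) (hB : Function.Injective B) (hne : ∀ i j, A i ≠ B j)
    (i j : Fin k) (hij : i ≠ j) :
    interlacementMatrix A B i j = arc (A j) (B j) (A i) + arc (A j) (B j) (B i) := by
  have h2 : (1 + 1 : ZMod 2) = 0 := by decide
  have h1 := hAB i
  have h3 := hAB j
  have h4 := hA.ne hij
  have h5 := hB.ne hij
  have h6 := hne i j
  have h7 := hne j i
  simp only [interlacementMatrix, arc, Matrix.of_apply, ne_eq, hij, not_false_eq_true, true_and]
  simp only [Fin.le_def, Fin.lt_def, ne_eq, Fin.ext_iff] at *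
  split_ifs <;> first | omega | simp [h2]

/-- For pairwise disjoint transpositions `σ₁, …, σ_k` of elements of `{1, …, m}` with
interlacement matrix `I`, with `π_S = σ ⋅ ∏_{i ∈ S} σᵢ` (where `σ = (1 2 … m)`) and `I_S`
the principal submatrix of `I` on `S`, we have
`Σ_{S ⊆ {1,…,k}} (y−1)^(orb(π_S)−1) = Σ_{S ⊆ {1,…,k}} (y−1)^(ν(I_S))` in `ℤ[y]`. -/
theorem cohn_lempel_generating_function {m k : ℕ} (hm : 1 ≤ m) (A B : Fin k → Fin m)
    (hAB : ∀ i, A i < B i)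
    (hdisj : ∀ i j, i ≠ j →
      Equiv.Perm.Disjoint (Equiv.swap (A i) (B i)) (Equiv.swap (A j) (B j))) :
    ∑ S : Finset (Fin k),
        (Polynomial.X - 1 : Polynomial ℤ) ^
          (orbitCount
            ((S.noncommProd (fun i => Equiv.swap (A i) (B i))
                (fun i _ j _ hij => (hdisj i j hij).commute)) * finRotate m) - 1) =
      ∑ S : Finset (Fin k),
        (Polynomial.X - 1 : Polynomial ℤ) ^
          nullity ((interlacementMatrix A B).submatrix
            (fun i : {x // x ∈ S} => (i : Fin k)) (fun j : {x // x ∈ S} => (j : Fin k))) := by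
  obtain ⟨n, rfl⟩ : ∃ n, m = n + 1 := ⟨m - 1, by omega⟩
  -- A point common to two distinct transpositions would be fixed by one of them.
  have hsep : ∀ i j, i ≠ j → ∀ x, (x = A i ∨ x = B i) → (x = A j ∨ x = B j) → False := by
    intro i j hij x hi hj
    have h : ∀ l, (x = A l ∨ x = B l) → Equiv.swap (A l) (B l) x ≠ x := by
      rintro l (rfl | rfl)
      · simpa using (hAB l).ne'
      · simpa using (hAB l).ne
    exact (hdisj i j hij x).elim (h i hi) (h j hj)
  have hA : Function.Injective A := fun i j h => by
    by_contra hij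
    exact hsep i j hij (A i) (Or.inl rfl) (Or.inl h)
  have hB : Function.Injective B := fun i j h => by
    by_contra hij
    exact hsep i j hij (B i) (Or.inr rfl) (Or.inr h)
  have hne : ∀ i j, A i ≠ B j := fun i j h => by
    rcases eq_or_ne i j with rfl | hij
    · exact (hAB i).ne h
    · exact hsep i j hij (A i) (Or.inl rfl) (Or.inr h)
  refine Finset.sum_congr rfl fun S _ => ?_
  congr 1
  exact Nat.sub_eq_of_eq_add (orbitCount_eq (M := (interlacementMatrix A B).submatrix
      (fun i : {x // x ∈ S} => (i : Fin k)) (fun j : {x // x ∈ S} => (j : Fin k)))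
    (fun i => hAB i) (hA.comp Subtype.val_injective)
    (hB.comp Subtype.val_injective) (fun i j => hne i j)
    (isSwapProduct_noncommProd A B hA hB hne S (fun i _ j _ hij => (hdisj i j hij).commute))
    (fun i j hij => interlacementMatrix_eq_arc A B hAB hA hB hne i j
      (Subtype.val_injective.ne hij))
    (fun i => by simp [interlacementMatrix]))
end

section
/- Let σ₁,…,σ_k be pairwise disjoint transpositions of elements of {1,…,m}, no two of which are interlaced (so the interlacement matrix I is the zero matrix). Then the permutation σσ₁⋯σ_k of {1,…,m} has exactly k+1 orbits. -/
/-! ### Splitting a cycle by a transposition -/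

lemma sameCycle_step {α : Type*} [Finite α] {f : Equiv.Perm α} {P : α → Prop} {x y : α}
    (h : f.SameCycle x y) (hx : P x) (hP : ∀ z, P z → P (f z)) : P y := by
  obtain ⟨n, -, rfl⟩ := h.exists_pow_eq'
  clear h
  induction n with
  | zero => simpa using hx
  | succ n ih => rw [pow_succ', Equiv.Perm.mul_apply]; exact hP _ ih

/-- The two points `a`, `b` of a cycle of `f` are separated in `swap a b * f`: if `n` is least with
`f ^ n a = b`, then `a, f a, …, f ^ (n - 1) a` is closed under `swap a b * f`. -/
lemma not_sameCycle_swap_mul {α : Type*} [Finite α] [DecidableEq α] {f : Equiv.Perm α} {a b : α}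
    (hab : a ≠ b) (h : f.SameCycle a b) : ¬ (Equiv.swap a b * f).SameCycle a b := by
  classical
  intro h'
  have hex : ∃ n : ℕ, (f ^ n) a = b := by
    obtain ⟨n, -, hn⟩ := h.exists_pow_eq'
    exact ⟨n, hn⟩
  have hn := Nat.find_spec hex
  have hmin : ∀ j, j < Nat.find hex → (f ^ j) a ≠ b := fun j hj => Nat.find_min hex hj
  generalize Nat.find hex = n at hn hmin
  have hn0 : 0 < n := by
    rcases Nat.eq_zero_or_pos n with rfl | h0
    · exact absurd (by simpa using hn) hab
    · exact h0
  obtain ⟨j, hj, hjb⟩ : ∃ j, j < n ∧ (f ^ j) a = b := by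
    refine sameCycle_step (P := fun y => ∃ j, j < n ∧ (f ^ j) a = y) h' ⟨0, hn0, by simp⟩ ?_
    rintro _ ⟨j, hj, rfl⟩
    rw [Equiv.Perm.mul_apply, ← Equiv.Perm.mul_apply f, ← pow_succ']
    rcases Nat.lt_or_ge (j + 1) n with hlt | hge
    · refine ⟨j + 1, hlt, (Equiv.swap_apply_of_ne_of_ne ?_ (hmin _ hlt)).symm⟩
      -- a return to `a` before time `n` would give an earlier visit to `b`
      intro hret
      refine hmin (n - (j + 1)) (by omega) ?_
      have : (f ^ (n - (j + 1))) ((f ^ (j + 1)) a) = b := by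
        rw [← Equiv.Perm.mul_apply, ← pow_add, Nat.sub_add_cancel hlt.le, hn]
      rwa [hret] at this
    · obtain rfl : j + 1 = n := by omega
      exact ⟨0, hn0, by rw [hn, Equiv.swap_apply_right]; rfl⟩
  exact hmin j hj hjb

lemma sameCycle_of_sameCycle_swap_mul {α : Type*} [Finite α] [DecidableEq α] {f : Equiv.Perm α}
    {a b x y : α} (h : f.SameCycle a b) (hxy : (Equiv.swap a b * f).SameCycle x y) :
    f.SameCycle x y := by
  refine sameCycle_step (P := fun y => f.SameCycle x y) hxy (Equiv.Perm.SameCycle.refl f x) ?_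
  intro z hz
  have hz' : f.SameCycle x (f z) := Equiv.Perm.sameCycle_apply_right.2 hz
  rw [Equiv.Perm.mul_apply]
  rcases eq_or_ne (f z) a with ha | ha
  · rw [ha, Equiv.swap_apply_left]; rw [ha] at hz'; exact hz'.trans h
  rcases eq_or_ne (f z) b with hb | hb
  · rw [hb, Equiv.swap_apply_right]; rw [hb] at hz'; exact hz'.trans h.symm
  rwa [Equiv.swap_apply_of_ne_of_ne ha hb]

/-- Left multiplication by `swap a b` affects only cycles through `a` or `b`. -/
lemma sameCycle_swap_mul_or {α : Type*} [Finite α] [DecidableEq α] {f : Equiv.Perm α}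
    {a b x y : α} (hxy : f.SameCycle x y) :
    (Equiv.swap a b * f).SameCycle x y ∨
      (((Equiv.swap a b * f).SameCycle x a ∨ (Equiv.swap a b * f).SameCycle x b) ∧
        ((Equiv.swap a b * f).SameCycle y a ∨ (Equiv.swap a b * f).SameCycle y b)) := by
  set g := Equiv.swap a b * f with hg
  refine sameCycle_step (P := fun y => g.SameCycle x y ∨
    ((g.SameCycle x a ∨ g.SameCycle x b) ∧ (g.SameCycle y a ∨ g.SameCycle y b))) hxy
    (Or.inl (Equiv.Perm.SameCycle.refl g x)) ?_
  intro z hz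
  have hzz : g.SameCycle z (g z) := Equiv.Perm.sameCycle_apply_right.2 (.refl g z)
  have hgz : g z = Equiv.swap a b (f z) := rfl
  rcases eq_or_ne (f z) a with ha | ha
  · rw [ha, Equiv.swap_apply_left] at hgz
    rw [hgz] at hzz
    rw [ha]
    refine Or.inr ⟨?_, Or.inl (.refl g a)⟩
    rcases hz with hz | hz
    · exact Or.inr (hz.trans hzz)
    · exact hz.1
  rcases eq_or_ne (f z) b with hb | hb
  · rw [hb, Equiv.swap_apply_right] at hgz
    rw [hgz] at hzz
    rw [hb]
    refine Or.inr ⟨?_, Or.inr (.refl g b)⟩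
    rcases hz with hz | hz
    · exact Or.inl (hz.trans hzz)
    · exact hz.1
  rw [Equiv.swap_apply_of_ne_of_ne ha hb] at hgz
  rw [hgz] at hzz
  rcases hz with hz | ⟨h1, h2⟩
  · exact Or.inl (hz.trans hzz)
  · exact Or.inr ⟨h1, h2.imp hzz.symm.trans hzz.symm.trans⟩

/-- Deleting the orbit of `b` from the orbits of `swap a b * f` leaves a system in bijection with
the orbits of `f`. -/
lemma orbitCount_swap_mul {α : Type*} [Finite α] [DecidableEq α] {f : Equiv.Perm α} {a b : α}
    (hab : a ≠ b) (h : f.SameCycle a b) :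
    orbitCount (Equiv.swap a b * f) = orbitCount f + 1 := by
  classical
  have hsep := not_sameCycle_swap_mul hab h
  set g := Equiv.swap a b * f with hg
  have hgf : ∀ x y, g.SameCycle x y → f.SameCycle x y :=
    fun x y => sameCycle_of_sameCycle_swap_mul h
  let φ : Quotient (sameCycleSetoid g) → Quotient (sameCycleSetoid f) :=
    Quotient.map' id hgf
  have hbij : Function.Bijective
      (fun q : {q // q ≠ (Quotient.mk (sameCycleSetoid g) b)} => φ q.1) := by
    constructor
    · rintro ⟨p, hp⟩ ⟨q, hq⟩ hpq
      induction p using Quotient.inductionOn with | _ x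
      induction q using Quotient.inductionOn with | _ y
      have hx : ¬ g.SameCycle x b := fun hh => hp (Quotient.sound hh)
      have hy : ¬ g.SameCycle y b := fun hh => hq (Quotient.sound hh)
      have hxy : f.SameCycle x y := Quotient.exact hpq
      refine Subtype.ext (Quotient.sound (?_ : g.SameCycle x y))
      rcases sameCycle_swap_mul_or (a := a) (b := b) hxy with h1 | ⟨h1, h2⟩
      · exact h1
      · exact (h1.resolve_right hx).trans (h2.resolve_right hy).symm
    · intro q
      induction q using Quotient.inductionOn with | _ x
      by_cases hx : g.SameCycle x b
      · exact ⟨⟨Quotient.mk _ a, fun hh => hsep (Quotient.exact hh)⟩,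
          Quotient.sound (h.trans (hgf _ _ hx).symm)⟩
      · exact ⟨⟨Quotient.mk _ x, fun hh => hx (Quotient.exact hh)⟩, rfl⟩
  unfold orbitCount
  rw [← Nat.card_congr (Equiv.ofBijective _ hbij),
    ← Nat.card_congr (Equiv.optionSubtypeNe (Quotient.mk (sameCycleSetoid g) b)),
    Finite.card_option]

/-! ### Products of disjoint transpositions and the full cycle -/

lemma ne_of_disjoint_swap {α : Type*} [DecidableEq α] {a b c d : α} (hab : a ≠ b) (hcd : c ≠ d)
    (h : Equiv.Perm.Disjoint (Equiv.swap a b) (Equiv.swap c d)) :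
    a ≠ c ∧ a ≠ d ∧ b ≠ c ∧ b ≠ d := by
  have ha := h a
  have hb := h b
  rw [Equiv.swap_apply_left] at ha
  rw [Equiv.swap_apply_right] at hb
  refine ⟨?_, ?_, ?_, ?_⟩ <;> rintro rfl <;>
    simp [hab, hab.symm, hcd, hcd.symm] at ha hb

lemma prod_swap_apply {α : Type*} [DecidableEq α] {k : ℕ} (A B : Fin k → α)
    (hAB : ∀ i, A i ≠ B i)
    (hdisj : ∀ i j, i ≠ j →
      Equiv.Perm.Disjoint (Equiv.swap (A i) (B i)) (Equiv.swap (A j) (B j))) (x : α) :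
    ((List.ofFn fun i => Equiv.swap (A i) (B i)).prod x = x ∧ ∀ i, x ≠ A i ∧ x ≠ B i) ∨
    ∃ i, (x = A i ∧ (List.ofFn fun i => Equiv.swap (A i) (B i)).prod x = B i) ∨
      (x = B i ∧ (List.ofFn fun i => Equiv.swap (A i) (B i)).prod x = A i) := by
  induction k with
  | zero => exact Or.inl ⟨by simp, fun i => i.elim0⟩
  | succ k ih =>
    have ih := ih (fun i => A i.succ) (fun i => B i.succ) (fun i => hAB _)
      (fun i j hij => hdisj _ _ (by simpa using hij))
    rw [List.ofFn_succ, List.prod_cons, Equiv.Perm.mul_apply]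
    have hne : ∀ i : Fin k, _ := fun i => ne_of_disjoint_swap (hAB 0) (hAB i.succ)
      (hdisj 0 i.succ (Fin.succ_ne_zero i).symm)
    rcases ih with ⟨h1, h2⟩ | ⟨i, ⟨h1, h2⟩ | ⟨h1, h2⟩⟩
    · rw [h1]
      rcases eq_or_ne x (A 0) with ha | ha
      · exact Or.inr ⟨0, Or.inl ⟨ha, by rw [ha, Equiv.swap_apply_left]⟩⟩
      rcases eq_or_ne x (B 0) with hb | hb
      · exact Or.inr ⟨0, Or.inr ⟨hb, by rw [hb, Equiv.swap_apply_right]⟩⟩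
      exact Or.inl ⟨Equiv.swap_apply_of_ne_of_ne ha hb, Fin.cases ⟨ha, hb⟩ h2⟩
    · refine Or.inr ⟨i.succ, Or.inl ⟨h1, ?_⟩⟩
      rw [h2]
      exact Equiv.swap_apply_of_ne_of_ne (hne i).2.1.symm (hne i).2.2.2.symm
    · refine Or.inr ⟨i.succ, Or.inr ⟨h1, ?_⟩⟩
      rw [h2]
      exact Equiv.swap_apply_of_ne_of_ne (hne i).1.symm (hne i).2.2.1.symm

lemma val_finRotate {m : ℕ} (x : Fin m) (hx : x.val + 1 < m) :
    (finRotate m x).val = x.val + 1 := by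
  obtain ⟨n, rfl⟩ : ∃ n, m = n + 1 := ⟨m - 1, by omega⟩
  rw [finRotate_of_lt (by omega)]

lemma orbitCount_finRotate {m : ℕ} (hm : 1 ≤ m) : orbitCount (finRotate m) = 1 := by
  have key : ∀ n (hn : n < m), (finRotate m).SameCycle ⟨0, hm⟩ ⟨n, hn⟩ := by
    intro n
    induction n with
    | zero => intro _; exact .refl _ _
    | succ n ih =>
      intro hn
      have h := Equiv.Perm.sameCycle_apply_right.2 (ih (by omega))
      rwa [show finRotate m ⟨n, by omega⟩ = ⟨n + 1, hn⟩ from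
        Fin.ext (val_finRotate ⟨n, by omega⟩ hn)] at h
  unfold orbitCount
  rw [Nat.card_eq_one_iff_unique]
  refine ⟨⟨fun p q => ?_⟩, ⟨Quotient.mk _ ⟨0, hm⟩⟩⟩
  induction p using Quotient.inductionOn with | _ x
  induction q using Quotient.inductionOn with | _ y
  exact Quotient.sound ((key x x.2).symm.trans (key y y.2))

/-! ### Following an orbit along non-crossing chords -/

/-- If the chord `(a b)` is disjoint from the pairwise non-crossing chords `(A i B i)` and crosses
none of them, then every point `x` of `[a, b)` that is straddled by no chord starting after `a`
lies in the cycle of `b`. The case `x = a` is the one of interest. -/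
lemma sameCycle_of_noncrossing {m k : ℕ} (A B : Fin k → Fin m) (a b : Fin m)
    (hAB : ∀ i, A i < B i)
    (hdisj : ∀ i j, i ≠ j →
      Equiv.Perm.Disjoint (Equiv.swap (A i) (B i)) (Equiv.swap (A j) (B j)))
    (hnoninter : ∀ i j, i ≠ j →
      ¬ ((A i < A j ∧ A j < B i ∧ B i < B j) ∨ (A j < A i ∧ A i < B j ∧ B j < B i)))
    (hne : ∀ i, a ≠ A i ∧ a ≠ B i ∧ b ≠ A i ∧ b ≠ B i)
    (hab : ∀ i, ¬ ((a < A i ∧ A i < b ∧ b < B i) ∨ (A i < a ∧ a < B i ∧ B i < b)))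
    (n : ℕ) (x : Fin m) (hn : b.val - x.val = n) (hax : a ≤ x) (hxb : x < b)
    (hx : ∀ i, a < A i → A i ≤ x → B i ≤ x) :
    ((List.ofFn fun i => Equiv.swap (A i) (B i)).prod * finRotate m).SameCycle x b := by
  induction n using Nat.strong_induction_on generalizing x with
  | _ n ih =>
  have hstep : ((List.ofFn fun i => Equiv.swap (A i) (B i)).prod * finRotate m).SameCycle x
      ((List.ofFn fun i => Equiv.swap (A i) (B i)).prod (finRotate m x)) :=
    Equiv.Perm.sameCycle_apply_right.2 (.refl _ x)
  have hval := val_finRotate x (by omega)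
  have happ := prod_swap_apply A B (fun i => (hAB i).ne) hdisj (finRotate m x)
  generalize finRotate m x = y at hstep hval happ
  generalize (List.ofFn fun i => Equiv.swap (A i) (B i)).prod = τ at *
  rcases happ with ⟨h1, h2⟩ | ⟨i, ⟨h1, h2⟩ | ⟨h1, h2⟩⟩
  · rw [h1] at hstep
    rcases eq_or_ne y b with rfl | hyb
    · exact hstep
    · refine hstep.trans (ih _ ?_ y rfl ?_ ?_ ?_)
      · omega
      · omega
      · omega
      · intro j h3 h4
        have := hx j h3
        have := (h2 j).1
        omega
  · have := hne i
    have := hab i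
    have := hAB i
    rw [h2] at hstep
    refine hstep.trans (ih _ ?_ (B i) rfl ?_ ?_ ?_)
    · omega
    · omega
    · omega
    · intro j h3 h4
      rcases eq_or_ne i j with rfl | hij
      · exact le_rfl
      have := hx j h3
      have := hnoninter i j hij
      have := ne_of_disjoint_swap (hAB i).ne (hAB j).ne (hdisj i j hij)
      omega
  · exfalso
    -- a right end directly after `x` would belong to a chord straddling `x`
    have := hne i
    have := hab i
    have := hAB i
    have := hx i
    omega

/-- If `σ₁, …, σ_k` are pairwise disjoint transpositions of elements of `{1, …, m}`,
no two of which are interlaced, then `σ σ₁ ⋯ σ_k` (where `σ = (1 2 … m)`) has exactly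
`k + 1` orbits. -/
theorem cohn_lempel_noninterlaced {m k : ℕ} (hm : 1 ≤ m) (A B : Fin k → Fin m)
    (hAB : ∀ i, A i < B i)
    (hdisj : ∀ i j, i ≠ j →
      Equiv.Perm.Disjoint (Equiv.swap (A i) (B i)) (Equiv.swap (A j) (B j)))
    (hnoninter : ∀ i j, i ≠ j →
      ¬ ((A i < A j ∧ A j < B i ∧ B i < B j) ∨ (A j < A i ∧ A i < B j ∧ B j < B i))) :
    orbitCount ((List.ofFn fun i => Equiv.swap (A i) (B i)).prod * finRotate m) = k + 1 := by
  induction k with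
  | zero => simpa using orbitCount_finRotate hm
  | succ k ih =>
    have hdisj' : ∀ i j : Fin k, i ≠ j → _ := fun i j hij =>
      hdisj i.succ j.succ (by simpa using hij)
    have hnon' : ∀ i j : Fin k, i ≠ j → _ := fun i j hij =>
      hnoninter i.succ j.succ (by simpa using hij)
    rw [List.ofFn_succ, List.prod_cons, mul_assoc, orbitCount_swap_mul (hAB 0).ne,
      ih (fun i => A i.succ) (fun i => B i.succ) (fun i => hAB _) hdisj' hnon']
    refine sameCycle_of_noncrossing (fun i => A i.succ) (fun i => B i.succ) (A 0) (B 0)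
      (fun i => hAB _) hdisj' hnon' (fun i => ne_of_disjoint_swap (hAB 0).ne (hAB i.succ).ne
        (hdisj 0 i.succ (Fin.succ_ne_zero i).symm))
      (fun i => hnoninter 0 i.succ (Fin.succ_ne_zero i).symm) _ (A 0) rfl le_rfl (hAB 0) ?_
    intro i h1 h2
    exact absurd h1 (not_lt.2 h2)
end

section
/- (Double pivot reduction) Let A be a symmetric (k+2)×(k+2) matrix over GF(2) with rows and columns indexed by {0,1,2,…,k+1}, and suppose A₀₀ = A₁₁ = 0 and A₀₁ = A₁₀ = 1. Let B be the k×k matrix over GF(2) with entries B_{ij} = A_{ij} + A_{i0}·A_{1j} + A_{i1}·A_{0j} for i,j ∈ {2,…,k+1}. Then ν(A) = ν(B). -/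
lemma nullity_eq_finrank_ker {n : ℕ} (M : Matrix (Fin n) (Fin n) (ZMod 2)) :
    nullity M = Module.finrank (ZMod 2) (LinearMap.ker M.mulVecLin) := by
  have h := M.mulVecLin.finrank_range_add_finrank_ker
  rw [Module.finrank_fin_fun] at h
  simp only [nullity, Matrix.rank, Fintype.card_fin]
  omega

/-- Solving the two pivot rows for the first two coordinates: `A x = 0` amounts to formulas for
`x₀` and `x₁` in terms of the remaining coordinates `y`, together with `B y = 0`. -/
lemma mulVec_eq_zero_iff {k : ℕ} (A : Matrix (Fin (k + 2)) (Fin (k + 2)) (ZMod 2))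
    (h00 : A 0 0 = 0) (h11 : A 1 1 = 0) (h01 : A 0 1 = 1) (h10 : A 1 0 = 1)
    (B : Matrix (Fin k) (Fin k) (ZMod 2))
    (hB : ∀ i j : Fin k, B i j =
      A i.succ.succ j.succ.succ + A i.succ.succ 0 * A 1 j.succ.succ
        + A i.succ.succ 1 * A 0 j.succ.succ)
    (x : Fin (k + 2) → ZMod 2) :
    A.mulVec x = 0 ↔
      x 0 = ∑ j : Fin k, A 1 j.succ.succ * x j.succ.succ ∧
      x 1 = ∑ j : Fin k, A 0 j.succ.succ * x j.succ.succ ∧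
      B.mulVec (fun j => x j.succ.succ) = 0 := by
  have hBy : ∀ i : Fin k, B.mulVec (fun j => x j.succ.succ) i =
      A i.succ.succ 0 * (∑ j : Fin k, A 1 j.succ.succ * x j.succ.succ) +
      (A i.succ.succ 1 * (∑ j : Fin k, A 0 j.succ.succ * x j.succ.succ) +
      ∑ j : Fin k, A i.succ.succ j.succ.succ * x j.succ.succ) := by
    intro i
    simp only [Matrix.mulVec, dotProduct, hB, Finset.mul_sum, ← Finset.sum_add_distrib]
    exact Finset.sum_congr rfl fun j _ => by ring
  have hA : ∀ i, A.mulVec x i =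
      A i 0 * x 0 + (A i 1 * x 1 + ∑ j : Fin k, A i j.succ.succ * x j.succ.succ) := by
    intro i
    simp [Matrix.mulVec, dotProduct, Fin.sum_univ_succ]
  constructor
  · intro h
    have e0 : x 0 = ∑ j : Fin k, A 1 j.succ.succ * x j.succ.succ := by
      have := hA 1
      rw [h, h10, h11] at this
      simpa [CharTwo.add_eq_zero] using this.symm
    have e1 : x 1 = ∑ j : Fin k, A 0 j.succ.succ * x j.succ.succ := by
      have := hA 0
      rw [h, h00, h01] at this
      simpa [CharTwo.add_eq_zero] using this.symm
    refine ⟨e0, e1, funext fun i => ?_⟩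
    rw [hBy, ← e0, ← e1, ← hA, h]
    rfl
  · rintro ⟨e0, e1, h⟩
    funext i
    rw [hA]
    refine Fin.cases ?_ (fun i => Fin.cases ?_ (fun i => ?_) i) i
    · rw [h00, h01, ← e1]
      simp [CharTwo.add_self_eq_zero]
    · rw [Fin.succ_zero_eq_one, h10, h11, ← e0]
      simp [CharTwo.add_self_eq_zero]
    · rw [e0, e1, ← hBy, h]
      rfl

/-- **Double pivot reduction.** If `A` is a symmetric `(k+2)×(k+2)` matrix over GF(2)
with `A₀₀ = A₁₁ = 0` and `A₀₁ = A₁₀ = 1`, and `B` is the `k×k` matrix with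
`B_{ij} = A_{ij} + A_{i0}·A_{1j} + A_{i1}·A_{0j}` for `i, j ∈ {2, …, k+1}`,
then `ν(A) = ν(B)`. -/
theorem double_pivot_reduction {k : ℕ} (A : Matrix (Fin (k + 2)) (Fin (k + 2)) (ZMod 2))
    (hsymm : A.IsSymm) (h00 : A 0 0 = 0) (h11 : A 1 1 = 0) (h01 : A 0 1 = 1) (h10 : A 1 0 = 1)
    (B : Matrix (Fin k) (Fin k) (ZMod 2))
    (hB : ∀ i j : Fin k, B i j =
      A i.succ.succ j.succ.succ + A i.succ.succ 0 * A 1 j.succ.succ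
        + A i.succ.succ 1 * A 0 j.succ.succ) :
    nullity A = nullity B := by
  have key := mulVec_eq_zero_iff A h00 h11 h01 h10 B hB
  rw [nullity_eq_finrank_ker, nullity_eq_finrank_ker]
  let f : LinearMap.ker A.mulVecLin →ₗ[ZMod 2] LinearMap.ker B.mulVecLin :=
    (LinearMap.funLeft (ZMod 2) (ZMod 2) (fun j : Fin k => j.succ.succ)).restrict
      fun x hx => ((key x).1 hx).2.2
  refine (LinearEquiv.ofBijective f ⟨?_, ?_⟩).finrank_eq
  · rintro ⟨x, hx⟩ ⟨x', hx'⟩ h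
    have hy : ∀ j : Fin k, x j.succ.succ = x' j.succ.succ :=
      fun j => congrFun (congrArg Subtype.val h) j
    obtain ⟨e0, e1, -⟩ := (key x).1 hx
    obtain ⟨e0', e1', -⟩ := (key x').1 hx'
    refine Subtype.ext (funext fun i => ?_)
    refine Fin.cases ?_ (fun i => Fin.cases ?_ (fun i => hy i) i) i
    · simp only [e0, e0', hy]
    · simp only [Fin.succ_zero_eq_one, e1, e1', hy]
  · rintro ⟨y, hy⟩
    let x : Fin (k + 2) → ZMod 2 := Fin.cons (∑ j : Fin k, A 1 j.succ.succ * y j)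
      (Fin.cons (∑ j : Fin k, A 0 j.succ.succ * y j) y)
    exact ⟨⟨x, (key x).2 ⟨rfl, rfl, hy⟩⟩, rfl⟩
end

section
/- (Effect of a κ-transform on interlacement) Let w be a double occurrence word on n vertices, let a be a vertex, and let w∗ be the κ-transform of w at a. Then: (i) for every vertex v ≠ a, v is interlaced with a in w∗ if and only if v is interlaced with a in w; and (ii) for all distinct vertices u,v both different from a, u and v are interlaced in w∗ if and only if exactly one of the following holds: u and v are interlaced in w, or both u and v are interlaced with a in w. -/
/-! Reversing the arc after position `m` moves a letter at position `i` to `reflect n m i`, an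
involution of the positions which fixes `0, …, m`; so the occurrences of a vertex in the
κ-transform are the reflections of its occurrences in `w` (`OccursAt.kappaTransform`).
Interlacement of two vertices depends only on their occurrences: exactly one occurrence of `v`
must lie between those of `u` (`OccursAt.interlaced_iff`). As `a` stays at `0` and `m`, a vertex
is interlaced with `a` exactly when it has one occurrence on each side of `m`, which the
reflection preserves. For `u, v ≠ a`, the relative order of an occurrence of `u` and one of `v`
is changed only when both lie beyond `m`. If both occurrences of one of the vertices lie on the
same side of `m`, the alternation is unaffected; if both vertices straddle `m`, exactly one pair
is swapped and the alternation is toggled. This last comparison is linear arithmetic. -/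

open scoped Classical

/-- A double occurrence word on `n` vertices: a map from the `2n` cyclic positions to the
vertices in which every vertex occurs at exactly two positions. -/
def DoubleOccurrence {n : ℕ} (w : Fin (2 * n) → Fin n) : Prop :=
  ∀ v : Fin n, (Finset.univ.filter fun p => w p = v).card = 2

/-- Distinct vertices `u` and `v` are interlaced in `w` when the two occurrences of `v` lie
in different cyclic arcs determined by the two occurrences of `u`; cutting the cycle at
position `0`, this says that exactly one occurrence of `v` lies strictly between the two
occurrences of `u`. -/
def Interlaced {n : ℕ} (w : Fin (2 * n) → Fin n) (u v : Fin n) : Prop :=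
  u ≠ v ∧ ∀ p q : Fin (2 * n), p < q → w p = u → w q = u →
    (Finset.univ.filter fun r => p < r ∧ r < q ∧ w r = v).card = 1

/-- The κ-transform of `w` at the vertex occurring at positions `0` and `m`: the arc of `w`
strictly between position `m` and position `0` is reversed, i.e. `w∗(i) = w(i)` for
`i ≤ m` and `w∗(i) = w(2n + m − i)` for `m < i < 2n`. -/
def kappaTransform {n : ℕ} (w : Fin (2 * n) → Fin n) (m : ℕ) : Fin (2 * n) → Fin n :=
  fun i =>
    if (i : ℕ) ≤ m then w i
    else w ⟨(2 * n + m - (i : ℕ)) % (2 * n), Nat.mod_lt _ (by have := i.isLt; omega)⟩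

/-- The vertex `v` occurs in `w` exactly at the two distinct positions `x` and `y`, in no
particular order. -/
def OccursAt {n : ℕ} (w : Fin (2 * n) → Fin n) (v : Fin n) (x y : Fin (2 * n)) : Prop :=
  x ≠ y ∧ ∀ i, w i = v ↔ i = x ∨ i = y

/-- `r` lies strictly between `p` and `q`, which may come in either order. -/
def StrictBtw (p q r : ℕ) : Prop := min p q < r ∧ r < max p q

/-- The position in `w` read by the κ-transform at position `i`. -/
def reflect (n m i : ℕ) : ℕ := if i ≤ m then i else 2 * n + m - i

lemma reflect_lt {n m i : ℕ} (hi : i < 2 * n) : reflect n m i < 2 * n := by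
  unfold reflect; split_ifs <;> grind

lemma reflect_reflect {n m i : ℕ} (hi : i < 2 * n) : reflect n m (reflect n m i) = i := by
  unfold reflect; split_ifs <;> grind

/-- The arithmetic core: the reflection toggles the alternation of `{p, q}` and `{r, s}` exactly
when `m` separates both pairs. -/
lemma strictBtw_reflect_iff {n m p q r s : ℕ} (hpm : p ≠ m) (hqm : q ≠ m) (hrm : r ≠ m)
    (hsm : s ≠ m) (hpr : p ≠ r) (hps : p ≠ s) (hqr : q ≠ r) (hqs : q ≠ s)
    (lp : p < 2 * n) (lq : q < 2 * n) (lr : r < 2 * n) (ls : s < 2 * n) :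
    (StrictBtw (reflect n m p) (reflect n m q) (reflect n m r) ↔
        ¬ StrictBtw (reflect n m p) (reflect n m q) (reflect n m s)) ↔
      Xor' (StrictBtw p q r ↔ ¬ StrictBtw p q s) (StrictBtw p q m ∧ StrictBtw r s m) := by
  simp only [StrictBtw, reflect, Xor']
  by_cases h1 : p ≤ m <;> by_cases h2 : q ≤ m <;> by_cases h3 : r ≤ m <;>
    by_cases h4 : s ≤ m <;> simp only [h1, h2, h3, h4, if_true, if_false] <;>
    rcases le_total p q with h5 | h5 <;> rcases le_total r s with h6 | h6 <;> grind

lemma kappaTransform_apply {n : ℕ} (w : Fin (2 * n) → Fin n) (m : ℕ) (i : Fin (2 * n)) :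
    kappaTransform w m i = w ⟨reflect n m i, reflect_lt i.isLt⟩ := by
  unfold kappaTransform
  split_ifs with h
  · congr 1; ext; simp [reflect, h]
  · have := i.isLt
    congr 1; ext
    simp only [reflect, if_neg h]
    exact Nat.mod_eq_of_lt (by omega)

lemma DoubleOccurrence.exists_occursAt {n : ℕ} {w : Fin (2 * n) → Fin n}
    (hw : DoubleOccurrence w) (v : Fin n) : ∃ x y, OccursAt w v x y := by
  obtain ⟨x, y, hxy, h⟩ := Finset.card_eq_two.mp (hw v)
  refine ⟨x, y, hxy, fun i => ?_⟩
  simpa using Finset.ext_iff.mp h i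

lemma DoubleOccurrence.occursAt {n : ℕ} {w : Fin (2 * n) → Fin n} (hw : DoubleOccurrence w)
    {v : Fin n} {x y : Fin (2 * n)} (hxy : x ≠ y) (hx : w x = v) (hy : w y = v) :
    OccursAt w v x y := by
  obtain ⟨x', y', h', h⟩ := hw.exists_occursAt v
  have h1 := (h x).mp hx
  have h2 := (h y).mp hy
  refine ⟨hxy, fun i => ?_⟩
  rw [h]
  grind

lemma OccursAt.kappaTransform {n : ℕ} {w : Fin (2 * n) → Fin n} {v : Fin n}
    {x y : Fin (2 * n)} (h : OccursAt w v x y) (m : ℕ) :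
    OccursAt (kappaTransform w m) v ⟨reflect n m x, reflect_lt x.isLt⟩
      ⟨reflect n m y, reflect_lt y.isLt⟩ := by
  have key : ∀ i j : Fin (2 * n), reflect n m i = j ↔ (i : ℕ) = reflect n m j := fun i j =>
    ⟨fun e => by rw [← e, reflect_reflect i.isLt], fun e => by rw [e, reflect_reflect j.isLt]⟩
  refine ⟨fun e => h.1 ?_, fun i => ?_⟩
  · have e' : reflect n m x = reflect n m y := congrArg Fin.val e
    ext
    rw [← reflect_reflect (m := m) x.isLt, e', reflect_reflect y.isLt]
  · rw [kappaTransform_apply, h.2]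
    simp only [Fin.ext_iff, key]

/-- Interlacement read off from the occurrences: exactly one of the two occurrences of `v` is
strictly between those of `u`. -/
lemma OccursAt.interlaced_iff {n : ℕ} {w : Fin (2 * n) → Fin n} {u v : Fin n} (huv : u ≠ v)
    {p q r s : Fin (2 * n)} (hu : OccursAt w u p q) (hv : OccursAt w v r s) :
    Interlaced w u v ↔ (StrictBtw p q r ↔ ¬ StrictBtw p q s) := by
  wlog hpq : p < q generalizing p q
  · have hqp : q < p := lt_of_le_of_ne (not_lt.mp hpq) hu.1.symm
    have := this (p := q) (q := p) ⟨hu.1.symm, fun i => by rw [hu.2, or_comm]⟩ hqp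
    simpa only [StrictBtw, min_comm, max_comm] using this
  have hcount : Interlaced w u v ↔
      (Finset.univ.filter fun t => p < t ∧ t < q ∧ w t = v).card = 1 := by
    refine ⟨fun h => h.2 p q hpq ((hu.2 p).mpr (Or.inl rfl)) ((hu.2 q).mpr (Or.inr rfl)),
      fun h => ⟨huv, fun p' q' hlt hp hq => ?_⟩⟩
    -- The only increasing pair of occurrences of `u` is `(p, q)`.
    obtain ⟨rfl, rfl⟩ : p' = p ∧ q' = q := by
      rw [hu.2] at hp hq
      grind
    exact h
  have hfilter : (Finset.univ.filter fun t => p < t ∧ t < q ∧ w t = v) =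
      ({r, s} : Finset (Fin (2 * n))).filter fun t => p < t ∧ t < q := by
    ext t
    simp only [Finset.mem_filter, Finset.mem_univ, true_and, hv.2, Finset.mem_insert,
      Finset.mem_singleton]
    tauto
  have hbtw : ∀ t : Fin (2 * n), StrictBtw p q t ↔ p < t ∧ t < q := fun t => by
    simp only [StrictBtw, Fin.lt_def] at *
    omega
  rw [hcount, hfilter, hbtw, hbtw, Finset.filter_insert, Finset.filter_singleton]
  have hrs := hv.1
  by_cases h1 : p < r ∧ r < q <;> by_cases h2 : p < s ∧ s < q <;> simp [h1, h2, hrs]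

/-- **Effect of a κ-transform on interlacement.** Let `w` be a double occurrence word,
`a` a vertex occurring at positions `0` and `m`, and `w∗` the κ-transform of `w` at `a`.
Then (i) for every vertex `v ≠ a`, `v` is interlaced with `a` in `w∗` iff it is in `w`;
and (ii) for distinct `u, v` both different from `a`, `u` and `v` are interlaced in `w∗`
iff exactly one of the following holds: `u` and `v` are interlaced in `w`, or both `u`
and `v` are interlaced with `a` in `w`. -/
theorem kappaTransform_interlaced {n : ℕ} (w : Fin (2 * n) → Fin n)
    (hw : DoubleOccurrence w) (a : Fin n) (m : ℕ) (hm0 : 0 < m) (hm : m < 2 * n)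
    (h0 : w ⟨0, Nat.lt_trans hm0 hm⟩ = a) (hma : w ⟨m, hm⟩ = a) :
    (∀ v : Fin n, v ≠ a → (Interlaced (kappaTransform w m) v a ↔ Interlaced w v a)) ∧
      (∀ u v : Fin n, u ≠ v → u ≠ a → v ≠ a →
        (Interlaced (kappaTransform w m) u v ↔
          Xor' (Interlaced w u v) (Interlaced w u a ∧ Interlaced w v a))) := by
  have ha : OccursAt w a ⟨0, Nat.lt_trans hm0 hm⟩ ⟨m, hm⟩ :=
    hw.occursAt (by simp [Fin.ext_iff]; omega) h0 hma
  have ha' := ha.kappaTransform m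
  -- Occurrences of a vertex other than `a` avoid the positions `0` and `m`.
  have hne : ∀ {v : Fin n} {x y : Fin (2 * n)}, v ≠ a → OccursAt w v x y →
      (x : ℕ) ≠ 0 ∧ (x : ℕ) ≠ m ∧ (y : ℕ) ≠ 0 ∧ (y : ℕ) ≠ m := by
    intro v x y hva h
    have hx := (h.2 x).mpr (Or.inl rfl)
    have hy := (h.2 y).mpr (Or.inr rfl)
    refine ⟨?_, ?_, ?_, ?_⟩ <;> intro e <;> apply hva
    · rw [← hx, ← h0]; congr 1; exact Fin.ext e
    · rw [← hx, ← hma]; congr 1; exact Fin.ext e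
    · rw [← hy, ← h0]; congr 1; exact Fin.ext e
    · rw [← hy, ← hma]; congr 1; exact Fin.ext e
  have hr0 : reflect n m 0 = 0 := by simp [reflect]
  have hrm : reflect n m m = m := by simp [reflect]
  have hbtw0 : ∀ x y : ℕ, ¬ StrictBtw x y 0 := fun x y h => by
    unfold StrictBtw at h; omega
  have hwa : ∀ {v : Fin n} {x y : Fin (2 * n)}, v ≠ a → OccursAt w v x y →
      (Interlaced w v a ↔ StrictBtw x y m) := by
    intro v x y hva h
    rw [h.interlaced_iff hva ha]
    simp [hbtw0]
  refine ⟨fun v hva => ?_, fun u v huv hua hva => ?_⟩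
  · obtain ⟨x, y, h⟩ := hw.exists_occursAt v
    rw [hwa hva h, (h.kappaTransform m).interlaced_iff hva ha']
    simp only [hr0, hrm, hbtw0, false_iff, not_not]
    have := hne hva h
    have := x.isLt
    have := y.isLt
    unfold StrictBtw reflect
    split_ifs <;> grind
  · obtain ⟨p, q, hu⟩ := hw.exists_occursAt u
    obtain ⟨r, s, hv⟩ := hw.exists_occursAt v
    rw [hwa hua hu, hwa hva hv, hu.interlaced_iff huv hv,
      (hu.kappaTransform m).interlaced_iff huv (hv.kappaTransform m)]
    have hpm := hne hua hu
    have hrm' := hne hva hv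
    have hdisj : ∀ i j : Fin (2 * n), w i = u → w j = v → (i : ℕ) ≠ j := by
      rintro i j hi hj e
      exact huv (by rw [← hi, ← hj, Fin.ext e])
    have hp := (hu.2 p).mpr (Or.inl rfl)
    have hq := (hu.2 q).mpr (Or.inr rfl)
    have hr := (hv.2 r).mpr (Or.inl rfl)
    have hs := (hv.2 s).mpr (Or.inr rfl)
    have hpr := hdisj p r hp hr
    have hps := hdisj p s hp hs
    have hqr := hdisj q r hq hr
    have hqs := hdisj q s hq hs
    have lp := p.isLt
    have lq := q.isLt
    have lr := r.isLt
    have ls := s.isLt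
    exact strictBtw_reflect_iff hpm.2.1 hpm.2.2.2 hrm'.2.1 hrm'.2.2.2 hpr hps hqr hqs lp lq lr ls
end
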